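/- Let B(q) = \sum_{n\ge 0} b_n q^n be a power series with non-negative real coefficients b_n that are weakly increasing in n, with radius of convergence at least one. Suppose \lambda, \alpha, \beta, \gamma are real numbers with \lambda > 0 and \gamma > 0 such that (i) B(e^{-t}) \sim \lambda (\log(1/t))^{\alpha} t^{\beta} e^{\gamma/t} as t \to 0^+ along the positive reals, and (ii) for every \Delta > 0 there exist constants C, \delta > 0 such that |B(e^{-z})| \le C (\log(1/|z|))^{\alpha} |z|^{\beta} e^{\gamma/|z|} for all z = x + iy with x > 0, |y| \le \Delta x and |z| < \delta. Then b_n \sim \frac{\lambda \gamma^{\beta/2 + 1/4} (\log n)^{\alpha}}{2^{\alpha+1} \sqrt{\pi} n^{\beta/2 + 3/4}} e^{2\sqrt{\gamma n}} as n \to \infty. -/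

import Mathlib

open Filter Topology Set

open MeasureTheory ProbabilityTheory

/-!
Tilting the coefficients to `b k e^{-xk}`, placing the mass of index `k` at `x k - γ / x` and
rescaling by `√x`, one obtains measures whose moment generating functions converge, by the real
asymptotics alone, to that of a Gaussian. Vitali's theorem carries this convergence to the
imaginary axis, that is, to characteristic functions.

The masses on fixed intervals have size `√x`, so they are governed by the characteristic functions
on a whole interval `[-Δ, Δ]` of unscaled frequencies, where the bound in the angle `|y| ≤ Δ x`
is exactly what dominates the integrals. A Fejér kernel, whose Fourier transform has compact
support, limits the frequencies that matter; stretching it makes it harmless. The conclusion is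
that the tilted measures are asymptotically uniform on bounded intervals, and since `b` is monotone
the mass just to the left and just to the right of `γ / x = x n` traps `b n`, for `x = √(γ / n)`.
-/

section Vitali

variable {ι E : Type*} [NormedAddCommGroup E] {l : Filter ι}

lemma exists_tendsto_of_eventually_norm_le [ProperSpace E] {u : Ultrafilter ι} {a : ι → E} {M : ℝ}
    (ha : ∀ᶠ i in u, ‖a i‖ ≤ M) : ∃ y, Tendsto a u (𝓝 y) := by
  obtain ⟨y, -, hy⟩ := (isCompact_closedBall (0 : E) M).ultrafilter_le_nhds (u.map a)
    (le_principal_iff.2 (ha.mono fun _ => mem_closedBall_zero_iff.2))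
  exact ⟨y, hy⟩

variable [NormedSpace ℂ E]

lemma norm_sub_sub_smul_deriv_le {f : ℂ → E} {c z : ℂ} {r M : ℝ}
    (hf : DifferentiableOn ℂ f (Metric.ball c r)) (hM : ∀ w ∈ Metric.ball c r, ‖f w‖ ≤ M)
    (hz : z ∈ Metric.ball c r) :
    ‖f z - f c - (z - c) • deriv f c‖ ≤ 4 * M / r ^ 2 * ‖z - c‖ ^ 2 := by
  have hr : 0 < r := Metric.nonempty_ball.mp ⟨z, hz⟩
  have hc : c ∈ Metric.ball c r := Metric.mem_ball_self hr
  have hfc : HasDerivAt f (deriv f c) c :=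
    (hf.differentiableAt (Metric.isOpen_ball.mem_nhds hc)).hasDerivAt
  have hosc : ∀ w ∈ Metric.ball c r, ‖f w - f c‖ ≤ 2 * M := fun w hw => by
    linarith [norm_sub_le (f w) (f c), hM w hw, hM c hc]
  have hderiv : ‖deriv f c‖ ≤ 2 * M / r := Complex.norm_deriv_le_div_of_mapsTo_ball hf
    (fun w hw => mem_closedBall_iff_norm.2 (hosc w hw)) hr
  set p : ℂ → E := fun w => f w - (w - c) • deriv f c with hp
  have hpc : ∀ w, p w - p c = f w - f c - (w - c) • deriv f c := fun w => by
    simp only [hp, sub_self, zero_smul, sub_zero, sub_right_comm]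
  have hp_diff : DifferentiableOn ℂ p (Metric.ball c r) :=
    hf.sub (by fun_prop)
  have hp_maps : MapsTo p (Metric.ball c r) (Metric.closedBall (p c) (4 * M)) := fun w hw => by
    rw [mem_closedBall_iff_norm, hpc]
    have hlin : ‖(w - c) • deriv f c‖ ≤ 2 * M := by
      calc ‖(w - c) • deriv f c‖ ≤ r * (2 * M / r) := by
            rw [norm_smul]; gcongr; exact (mem_ball_iff_norm.1 hw).le
        _ = 2 * M := by field_simp
    linarith [norm_sub_le (f w - f c) ((w - c) • deriv f c), hosc w hw]
  have hp_little : (p · - p c) =o[𝓝 c] fun w => ‖w - c‖ ^ 1 := by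
    simpa only [hpc, pow_one, Asymptotics.isLittleO_norm_right] using! hfc.isLittleO
  have hle := Complex.dist_le_mul_div_pow_of_mapsTo_ball_of_isLittleO hp_diff hp_maps hp_little hz
  rw [dist_eq_norm, dist_eq_norm, hpc] at hle
  convert hle using 1
  ring

variable [ProperSpace E] {U : Set ℂ} {F : ι → ℂ → E} {M : ℝ}

lemma differentiableOn_of_tendsto_of_norm_le [l.NeBot] (hU : IsOpen U)
    (hF : ∀ᶠ i in l, DifferentiableOn ℂ (F i) U) (hM : ∀ᶠ i in l, ∀ z ∈ U, ‖F i z‖ ≤ M)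
    {H : ℂ → E} (hH : ∀ z ∈ U, Tendsto (F · z) l (𝓝 (H z))) : DifferentiableOn ℂ H U := by
  intro c hc
  obtain ⟨r, hr, hball⟩ := Metric.isOpen_iff.1 hU c hc
  -- The derivatives at `c` converge at least along an ultrafilter, and the quadratic error
  -- term in `norm_sub_sub_smul_deriv_le` is uniform in `i`.
  let u := Ultrafilter.of l
  have hul : (u : Filter ι) ≤ l := Ultrafilter.of_le l
  obtain ⟨D, hD⟩ : ∃ D, Tendsto (fun i => deriv (F i) c) u (𝓝 D) := by
    refine exists_tendsto_of_eventually_norm_le (M := 2 * M / r) (hul ?_)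
    filter_upwards [hF, hM] with i hFi hMi
    refine Complex.norm_deriv_le_div_of_mapsTo_ball (hFi.mono hball) (fun w hw => ?_) hr
    rw [mem_closedBall_iff_norm]
    linarith [norm_sub_le (F i w) (F i c), hMi w (hball hw), hMi c hc]
  have htaylor : ∀ w ∈ Metric.ball c r,
      ‖H w - H c - (w - c) • D‖ ≤ 4 * M / r ^ 2 * ‖w - c‖ ^ 2 := by
    intro w hw
    have hw_lim := (((hH w (hball hw)).mono_left hul).sub ((hH c hc).mono_left hul)).sub
      (hD.const_smul (w - c))
    refine le_of_tendsto hw_lim.norm (hul ?_)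
    filter_upwards [hF, hM] with i hFi hMi
    exact norm_sub_sub_smul_deriv_le (hFi.mono hball) (fun v hv => hMi v (hball hv)) hw
  have hderiv : HasDerivAt H D c := by
    refine .of_isLittleO (Asymptotics.IsBigO.trans_isLittleO (g := fun w => ‖w - c‖ ^ 2) ?_ ?_)
    · exact .of_bound _ (by
        filter_upwards [Metric.ball_mem_nhds c hr] with w hw
        simpa only [norm_pow, norm_norm] using htaylor w hw)
    · simpa only [norm_norm] using! Asymptotics.isLittleO_pow_sub_sub c one_lt_two
  exact hderiv.differentiableAt.differentiableWithinAt

/-- The **Vitali–Porter theorem**. -/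
theorem tendsto_of_frequently_tendsto_of_norm_le (hU : IsOpen U)
    (hUc : IsPreconnected U) (hF : ∀ᶠ i in l, DifferentiableOn ℂ (F i) U)
    (hM : ∀ᶠ i in l, ∀ z ∈ U, ‖F i z‖ ≤ M) {g : ℂ → E} (hg : DifferentiableOn ℂ g U) {z₀ : ℂ}
    (hz₀ : z₀ ∈ U) (hlim : ∃ᶠ z in 𝓝[≠] z₀, Tendsto (F · z) l (𝓝 (g z))) {z : ℂ} (hz : z ∈ U) :
    Tendsto (F · z) l (𝓝 (g z)) := by
  refine tendsto_iff_ultrafilter _ _ _ |>.2 fun u hu => ?_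
  have hexists : ∀ w ∈ U, ∃ y, Tendsto (F · w) u (𝓝 y) := fun w hw =>
    exists_tendsto_of_eventually_norm_le (hu (hM.mono fun _ h => h w hw))
  choose! H hH using hexists
  have hHU : DifferentiableOn ℂ H U :=
    differentiableOn_of_tendsto_of_norm_le hU (hu hF) (hu hM) hH
  have hHg : ∃ᶠ w in 𝓝[≠] z₀, H w = g w := by
    refine (hlim.and_eventually (nhdsWithin_le_nhds (hU.mem_nhds hz₀))).mono ?_
    exact fun w ⟨hw, hwU⟩ => tendsto_nhds_unique (hH w hwU) (hw.mono_left hu)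
  rw [← (hHU.analyticOnNhd hU).eqOn_of_preconnected_of_frequently_eq (hg.analyticOnNhd hU)
    hUc hz₀ hHg hz]
  exact hH z hz

end Vitali

section MomentGeneratingFunction

variable {ι Ω : Type*} [MeasurableSpace Ω] {l : Filter ι} {μ : ι → Measure Ω} {X : ι → Ω → ℝ}

lemma mgf_le_mgf_add_mgf_neg {μ : Measure Ω} {X : Ω → ℝ} {R t : ℝ}
    (hpos : Integrable (fun ω => Real.exp (R * X ω)) μ)
    (hneg : Integrable (fun ω => Real.exp (-R * X ω)) μ) (ht : |t| ≤ R) :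
    mgf X μ t ≤ mgf X μ R + mgf X μ (-R) := by
  obtain ⟨hRt, htR⟩ := abs_le.1 ht
  rw [mgf, mgf, mgf, ← integral_add hpos hneg]
  refine integral_mono (integrable_exp_mul_of_le_of_le hneg hpos hRt htR) (hpos.add hneg)
    fun ω => ?_
  rcases le_total 0 (X ω) with h | h
  · exact le_add_of_le_of_nonneg (by gcongr) (Real.exp_nonneg _)
  · exact le_add_of_nonneg_of_le (Real.exp_nonneg _)
      (Real.exp_le_exp.2 (mul_le_mul_of_nonpos_right hRt h))

lemma frequently_nhdsNE_zero_of_forall_ofReal {p : ℂ → Prop} {R : ℝ} (hR : 0 < R)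
    (hp : ∀ t : ℝ, |t| < R → p t) : ∃ᶠ z in 𝓝[≠] 0, p z := by
  have hreal : ∃ᶠ t : ℝ in 𝓝[≠] 0, |t| < R :=
    (eventually_nhdsWithin_of_eventually_nhds
      ((continuous_abs.tendsto' 0 0 abs_zero).eventually_lt_const hR)).frequently
  have hofReal : Tendsto ((↑) : ℝ → ℂ) (𝓝[≠] 0) (𝓝[≠] 0) :=
    tendsto_nhdsWithin_of_tendsto_nhds_of_eventually_within _
      ((Complex.continuous_ofReal.tendsto' 0 0 Complex.ofReal_zero).mono_left nhdsWithin_le_nhds)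
      (eventually_mem_nhdsWithin.mono fun t ht => by simpa using ht)
  exact hofReal.frequently (hreal.mono hp)

/-- **Curtiss's theorem**. -/
theorem tendsto_complexMGF_of_tendsto_mgf {R : ℝ} (hR : 0 < R)
    (hint : ∀ᶠ i in l, Integrable (fun ω => Real.exp (R * X i ω)) (μ i) ∧
      Integrable (fun ω => Real.exp (-R * X i ω)) (μ i))
    {g : ℂ → ℂ} (hg : DifferentiableOn ℂ g {z | |z.re| < R})
    (hlim : ∀ t : ℝ, |t| ≤ R → Tendsto (fun i => (mgf (X i) (μ i) t : ℂ)) l (𝓝 (g t)))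
    {z : ℂ} (hz : |z.re| < R) :
    Tendsto (fun i => complexMGF (X i) (μ i) z) l (𝓝 (g z)) := by
  have hstrip : {z : ℂ | |z.re| < R} = Complex.re ⁻¹' Ioo (-R) R := by
    ext; simp [abs_lt]
  have hU : IsOpen {z : ℂ | |z.re| < R} := isOpen_lt (by fun_prop) continuous_const
  have hUc : IsPreconnected {z : ℂ | |z.re| < R} := by
    rw [hstrip]
    exact ((convex_Ioo (-R) R).linear_preimage Complex.reLm).isPreconnected
  have hdiff : ∀ᶠ i in l, DifferentiableOn ℂ (complexMGF (X i) (μ i)) {z | |z.re| < R} := by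
    filter_upwards [hint] with i ⟨hpos, hneg⟩
    refine differentiableOn_complexMGF.mono fun z hz => ?_
    have hsub : Ioo (-R) R ⊆ integrableExpSet (X i) (μ i) := fun t ht =>
      integrable_exp_mul_of_le_of_le hneg hpos ht.1.le ht.2.le
    exact interior_maximal hsub isOpen_Ioo (abs_lt.1 hz)
  have hreal : ∀ t : ℝ, |t| ≤ R → Tendsto (fun i => mgf (X i) (μ i) t) l (𝓝 (g t).re) :=
    fun t ht => by
      simpa only [Function.comp_def, Complex.ofReal_re] using
        (Complex.continuous_re.tendsto _).comp (hlim t ht)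
  have hbound : ∀ᶠ i in l, ∀ z ∈ {z : ℂ | |z.re| < R},
      ‖complexMGF (X i) (μ i) z‖ ≤ (g R).re + (g (-R)).re + 1 := by
    have hends := (hreal R (abs_of_pos hR).le).add (hreal (-R) (by rw [abs_neg, abs_of_pos hR]))
    push_cast at hends
    filter_upwards [hint, hends.eventually_le_const (lt_add_one _)] with i ⟨hpos, hneg⟩ hle z hz
    exact (norm_complexMGF_le_mgf.trans (mgf_le_mgf_add_mgf_neg hpos hneg (le_of_lt hz))).trans hle
  refine tendsto_of_frequently_tendsto_of_norm_le hU hUc hdiff hbound hg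
    (z₀ := 0) (by simpa using hR) ?_ hz
  exact frequently_nhdsNE_zero_of_forall_ofReal hR fun t ht => by
    simpa only [complexMGF_ofReal] using hlim t ht.le

end MomentGeneratingFunction

section Fejer

/-- The tent function on `[-1, 1]`, the Fourier transform of the Fejér kernel `fejer`. -/
noncomputable def triangle (ξ : ℝ) : ℝ := max (1 - |ξ|) 0

/-- The Fejér kernel `(sin (u / 2) / (u / 2)) ^ 2`, normalized to take the value `1` at `0`; its
characteristic function has compact support. -/
noncomputable def fejer (u : ℝ) : ℝ := Real.sinc (u / 2) ^ 2

lemma continuous_triangle : Continuous triangle := by unfold triangle; fun_prop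

lemma triangle_nonneg (ξ : ℝ) : 0 ≤ triangle ξ := le_max_right _ _

lemma triangle_le_one (ξ : ℝ) : triangle ξ ≤ 1 :=
  max_le (by linarith [abs_nonneg ξ]) zero_le_one

lemma triangle_neg (ξ : ℝ) : triangle (-ξ) = triangle ξ := by simp only [triangle, abs_neg]

lemma triangle_eq_zero {ξ : ℝ} (h : 1 ≤ |ξ|) : triangle ξ = 0 := max_eq_right (by linarith)

lemma integrable_triangle : Integrable triangle := by
  refine continuous_triangle.integrable_of_hasCompactSupport
    (HasCompactSupport.intro (isCompact_Icc (a := -1) (b := 1)) fun ξ hξ => triangle_eq_zero ?_)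
  rw [Set.mem_Icc, ← abs_le, not_le] at hξ
  exact hξ.le

lemma continuous_fejer : Continuous fejer := by unfold fejer; fun_prop

lemma fejer_nonneg (u : ℝ) : 0 ≤ fejer u := sq_nonneg _

lemma fejer_zero : fejer 0 = 1 := by simp [fejer]

lemma fejer_le_one (u : ℝ) : fejer u ≤ 1 :=
  (sq_le_one_iff_abs_le_one _).2 (Real.abs_sinc_le_one _)

lemma integrable_fejer : Integrable fejer := by
  refine (integrable_inv_one_add_sq.const_mul 5).mono' continuous_fejer.aestronglyMeasurable
    (Eventually.of_forall fun u => ?_)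
  have hdecay : fejer u * u ^ 2 ≤ 4 := by
    rcases eq_or_ne u 0 with rfl | hu
    · simp
    · rw [fejer, Real.sinc_of_ne_zero (by positivity)]
      field_simp
      linarith [Real.sin_sq_le_one (u / 2)]
  rw [Real.norm_of_nonneg (fejer_nonneg u), ← div_eq_mul_inv, le_div_iff₀ (by positivity)]
  linarith [fejer_le_one u]

/-- The indicator function of `[-1/2, 1/2]`, whose convolution square is `triangle`. -/
noncomputable def rect : ℝ → ℂ := (Icc (-2⁻¹ : ℝ) 2⁻¹).indicator 1

lemma integrable_rect : Integrable rect := by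
  rw [rect, integrable_indicator_iff measurableSet_Icc]
  exact integrableOn_const (by simp)

lemma fourier_rect (v : ℝ) : FourierTransform.fourier rect v = (Real.sinc (Real.pi * v) : ℂ) := by
  have hint : FourierTransform.fourier rect v =
      ∫ ξ in (-2⁻¹ : ℝ)..2⁻¹, Complex.exp ((-2 * Real.pi * v * ξ : ℝ) * Complex.I) := by
    rw [Real.fourier_eq', intervalIntegral.integral_of_le (by norm_num),
      ← integral_Icc_eq_integral_Ioc, ← integral_indicator measurableSet_Icc]
    congr 1 with ξ
    simp only [rect, indicator_apply, Pi.one_apply, smul_eq_mul, mul_ite, mul_one, mul_zero,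
      RCLike.inner_apply, conj_trivial, mul_assoc]
  rcases eq_or_ne v 0 with rfl | hv
  · rw [hint]; norm_num
  · have hsubst := intervalIntegral.smul_integral_comp_mul_left (a := -2⁻¹) (b := 2⁻¹)
      (fun ξ : ℝ => Complex.exp (ξ * Complex.I)) (-2 * Real.pi * v)
    rw [← hint, intervalIntegral.integral_symm,
      show -2 * Real.pi * v * 2⁻¹ = -(Real.pi * v) by ring,
      show -2 * Real.pi * v * -2⁻¹ = Real.pi * v by ring, integral_exp_mul_I_eq_sinc,
      Complex.real_smul] at hsubst
    have hne : ((-2 * Real.pi * v : ℝ) : ℂ) ≠ 0 := by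
      exact_mod_cast mul_ne_zero (by simp [Real.pi_ne_zero]) hv
    refine mul_left_cancel₀ hne (hsubst.trans ?_)
    push_cast
    ring

lemma convolution_rect_rect :
    convolution rect rect (ContinuousLinearMap.mul ℂ ℂ) volume = fun x => (triangle x : ℂ) := by
  ext x
  have hprod : ∀ t, rect t * rect (x - t) =
      (Icc (max (-2⁻¹) (x - 2⁻¹)) (min 2⁻¹ (x + 2⁻¹))).indicator 1 t := fun t => by
    have hmem : x - t ∈ Icc (-2⁻¹ : ℝ) 2⁻¹ ↔ t ∈ Icc (x - 2⁻¹) (x + 2⁻¹) := by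
      constructor <;> rintro ⟨h₁, h₂⟩ <;> constructor <;> linarith
    simp only [rect, ← Icc_inter_Icc, indicator_apply, hmem, mem_inter_iff, Pi.one_apply]
    split_ifs <;> simp_all
  have hlength : min 2⁻¹ (x + 2⁻¹) - max (-2⁻¹) (x - 2⁻¹) = 1 - |x| := by
    rcases le_total 0 x with hx | hx
    · rw [min_eq_left (by linarith), max_eq_right (by linarith), abs_of_nonneg hx]; ring
    · rw [min_eq_right (by linarith), max_eq_left (by linarith), abs_of_nonpos hx]; ring
  simp only [convolution_def, ContinuousLinearMap.mul_apply', hprod, Pi.one_def]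
  rw [integral_indicator_const _ measurableSet_Icc, Real.volume_real_Icc, hlength, triangle,
    Complex.real_smul, mul_one]

lemma fourier_triangle (v : ℝ) :
    FourierTransform.fourier (fun ξ => (triangle ξ : ℂ)) v = fejer (2 * Real.pi * v) := by
  rw [← convolution_rect_rect, Real.fourier_mul_convolution_eq integrable_rect integrable_rect,
    fourier_rect, fejer, show 2 * Real.pi * v / 2 = Real.pi * v by ring]
  push_cast
  ring

lemma fejer_neg (u : ℝ) : fejer (-u) = fejer u := by
  rw [fejer, fejer, neg_div, Real.sinc_neg]

lemma integral_triangle_mul_cexp (u : ℝ) :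
    ∫ ξ : ℝ, (triangle ξ : ℂ) * Complex.exp (ξ * u * Complex.I) = fejer u := by
  have hv := fourier_triangle (-u / (2 * Real.pi))
  rw [mul_div_cancel₀ _ (by simp [Real.pi_ne_zero]), fejer_neg, Real.fourier_eq'] at hv
  rw [← hv]
  congr 1 with ξ
  rw [smul_eq_mul, mul_comm]
  congr 2
  simp only [RCLike.inner_apply, conj_trivial]
  push_cast
  field_simp

lemma integral_fejer_mul_cexp (t : ℝ) :
    ∫ u : ℝ, (fejer u : ℂ) * Complex.exp (t * u * Complex.I) = 2 * Real.pi * triangle t := by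
  have hpi : 2 * Real.pi ≠ 0 := by simp [Real.pi_ne_zero]
  have hF := funext fourier_triangle
  have hinv := congrFun (Continuous.fourierInv_fourier_eq (f := fun ξ : ℝ => (triangle ξ : ℂ))
    (Complex.continuous_ofReal.comp continuous_triangle) integrable_triangle.ofReal
    (by rw [hF]; exact (integrable_fejer.comp_mul_left' hpi).ofReal)) t
  have hsubst := Measure.integral_comp_mul_left
    (fun u : ℝ => (fejer u : ℂ) * Complex.exp (t * u * Complex.I)) (2 * Real.pi)
  rw [hF, Real.fourierInv_eq'] at hinv
  rw [abs_inv, abs_of_pos Real.two_pi_pos, eq_inv_smul_iff₀ hpi] at hsubst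
  rw [← hsubst, ← hinv, Complex.real_smul]
  push_cast
  congr 2 with u
  rw [smul_eq_mul, mul_comm]
  congr 2
  simp only [RCLike.inner_apply, conj_trivial]
  push_cast
  ring

end Fejer

section LevyConvergence

variable {E : Type*} [NormedAddCommGroup E] [InnerProductSpace ℝ E] [MeasurableSpace E]

lemma charFun_nnreal_smul (a : NNReal) (μ : Measure E) (t : E) :
    charFun (a • μ) t = a * charFun μ t := by
  rw [charFun_apply, charFun_apply, integral_smul_nnreal_measure, NNReal.smul_def,
    Complex.real_smul]

variable [BorelSpace E] [FiniteDimensional ℝ E]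

theorem finiteMeasure_tendsto_of_tendsto_charFun {μ : ℕ → FiniteMeasure E} {μ₀ : FiniteMeasure E}
    (h : ∀ t, Tendsto (fun n => charFun (μ n : Measure E) t) atTop
      (𝓝 (charFun (μ₀ : Measure E) t))) :
    Tendsto μ atTop (𝓝 μ₀) := by
  have hmass : Tendsto (fun n => (μ n).mass) atTop (𝓝 μ₀.mass) := by
    have h0 := (Complex.continuous_re.tendsto _).comp (h 0)
    simp only [charFun_zero, Function.comp_def, Complex.ofReal_re] at h0
    exact NNReal.tendsto_coe.1 h0
  rcases eq_or_ne μ₀ 0 with rfl | hμ₀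
  · exact FiniteMeasure.tendsto_zero_of_tendsto_zero_mass hmass
  have hnormalize : ∀ {ρ : FiniteMeasure E}, ρ ≠ 0 → ∀ t,
      charFun (ρ.normalize : Measure E) t = (ρ.mass⁻¹ : NNReal) * charFun (ρ : Measure E) t :=
    fun {ρ} hρ t => by rw [ρ.toMeasure_normalize_eq_of_nonzero hρ, charFun_nnreal_smul]
  have hmass₀ : μ₀.mass ≠ 0 := μ₀.mass_nonzero_iff.2 hμ₀
  refine FiniteMeasure.tendsto_of_tendsto_normalize_testAgainstNN_of_tendsto_mass
    (ProbabilityMeasure.tendsto_of_tendsto_charFun fun t => ?_) hmass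
  rw [hnormalize hμ₀]
  have hinv : Tendsto (fun n => (((μ n).mass⁻¹ : NNReal) : ℂ)) atTop (𝓝 (μ₀.mass⁻¹ : NNReal)) :=
    ((Complex.continuous_ofReal.comp NNReal.continuous_coe).tendsto _).comp (hmass.inv₀ hmass₀)
  refine (hinv.mul (h t)).congr' ?_
  filter_upwards [hmass.eventually_ne hmass₀] with n hn
  exact (hnormalize ((μ n).mass_nonzero_iff.1 hn) t).symm

end LevyConvergence

section Portmanteau

variable {ι Ω : Type*} {l : Filter ι} [MeasurableSpace Ω] [TopologicalSpace Ω]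
  [OpensMeasurableSpace Ω] [HasOuterApproxClosed Ω]

theorem finiteMeasure_tendsto_measure_of_null_frontier {μ : ι → FiniteMeasure Ω}
    {μ₀ : FiniteMeasure Ω} (h : Tendsto μ l (𝓝 μ₀)) {s : Set Ω} (hs : μ₀ (frontier s) = 0) :
    Tendsto (fun i => μ i s) l (𝓝 (μ₀ s)) := by
  rcases eq_or_ne μ₀ 0 with rfl | hμ₀
  · exact tendsto_of_tendsto_of_tendsto_of_le_of_le tendsto_const_nhds h.mass (fun _ => zero_le)
      (fun i => (μ i).apply_le_mass s)
  have : Nonempty Ω :=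
    not_isEmpty_iff.1 fun _ => hμ₀ (Subtype.ext (Measure.eq_zero_of_isEmpty _))
  simp only [FiniteMeasure.self_eq_mass_mul_normalize _ s]
  refine h.mass.mul (ProbabilityMeasure.tendsto_measure_of_null_frontier_of_tendsto
    (FiniteMeasure.tendsto_normalize_of_tendsto h hμ₀) ?_)
  rw [μ₀.normalize_eq_of_nonzero hμ₀, hs, mul_zero]

end Portmanteau

lemma measure_frontier_Icc (μ : Measure ℝ) [NullSingletonClass μ] (a d : ℝ) :
    μ (frontier (Icc a d)) = 0 := by
  rcases le_or_gt a d with had | had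
  · rw [frontier_Icc had]
    exact (toFinite _).measure_zero μ
  · rw [Icc_eq_empty_of_lt had, frontier_empty, measure_empty]

lemma tendsto_measureReal_Icc_of_tendsto_charFun {μ : ℕ → Measure ℝ} [∀ n, IsFiniteMeasure (μ n)]
    {μ₀ : Measure ℝ} [IsFiniteMeasure μ₀] [NullSingletonClass μ₀]
    (h : ∀ t : ℝ, Tendsto (fun n => charFun (μ n) t) atTop (𝓝 (charFun μ₀ t))) (a d : ℝ) :
    Tendsto (fun n => (μ n).real (Icc a d)) atTop (𝓝 (μ₀.real (Icc a d))) := by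
  let ν : ℕ → FiniteMeasure ℝ := fun n => ⟨μ n, inferInstance⟩
  let ν₀ : FiniteMeasure ℝ := ⟨μ₀, inferInstance⟩
  have hν : Tendsto ν atTop (𝓝 ν₀) := finiteMeasure_tendsto_of_tendsto_charFun h
  have hfrontier : ν₀ (frontier (Icc a d)) = 0 :=
    (FiniteMeasure.null_iff_toMeasure_null ν₀ _).2 (measure_frontier_Icc μ₀ a d)
  exact NNReal.tendsto_coe.2 (finiteMeasure_tendsto_measure_of_null_frontier hν hfrontier)

section FejerWeighted

/-- The measure with density the Fejér kernel with respect to `μ`; its characteristic function at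
`t` depends only on that of `μ` on `[t - 1, t + 1]`. -/
noncomputable def fejerWeighted (μ : Measure ℝ) : Measure ℝ :=
  μ.withDensity fun u => ENNReal.ofReal (fejer u)

variable {μ : Measure ℝ}

lemma isFiniteMeasure_fejerWeighted (h : Integrable fejer μ) : IsFiniteMeasure (fejerWeighted μ) :=
  isFiniteMeasure_withDensity_ofReal h.2

lemma integrable_fejer_of_isFiniteMeasure [IsFiniteMeasure μ] : Integrable fejer μ :=
  (integrable_const 1).mono' continuous_fejer.aestronglyMeasurable
    (Eventually.of_forall fun u => by
      rw [Real.norm_of_nonneg (fejer_nonneg u)]; exact fejer_le_one u)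

instance [IsFiniteMeasure μ] : IsFiniteMeasure (fejerWeighted μ) :=
  isFiniteMeasure_fejerWeighted integrable_fejer_of_isFiniteMeasure

instance : IsFiniteMeasure (fejerWeighted volume) := isFiniteMeasure_fejerWeighted integrable_fejer

instance [NullSingletonClass μ] : NullSingletonClass (fejerWeighted μ) := by
  unfold fejerWeighted; infer_instance

lemma charFun_fejerWeighted_eq_integral (t : ℝ) :
    charFun (fejerWeighted μ) t = ∫ u, (fejer u : ℂ) * Complex.exp (t * u * Complex.I) ∂μ := by
  rw [charFun_apply_real, fejerWeighted, integral_withDensity_eq_integral_toReal_smul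
    continuous_fejer.measurable.ennreal_ofReal (by simp)]
  simp only [ENNReal.toReal_ofReal (fejer_nonneg _), Complex.real_smul]

lemma charFun_fejerWeighted_volume (t : ℝ) :
    charFun (fejerWeighted volume) t = 2 * Real.pi * triangle t := by
  rw [charFun_fejerWeighted_eq_integral, integral_fejer_mul_cexp]

lemma fejer_mul_cexp_eq_integral (t u : ℝ) :
    (fejer u : ℂ) * Complex.exp (t * u * Complex.I) =
      ∫ ξ : ℝ, (triangle (ξ - t) : ℂ) * Complex.exp (ξ * u * Complex.I) := by
  rw [← integral_triangle_mul_cexp, ← integral_mul_const,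
    ← integral_sub_right_eq_self _ t]
  congr 1 with ξ
  rw [mul_assoc, ← Complex.exp_add]
  push_cast
  ring_nf

lemma charFun_fejerWeighted [IsFiniteMeasure μ] (t : ℝ) :
    charFun (fejerWeighted μ) t = ∫ ξ : ℝ, (triangle (ξ - t) : ℂ) * charFun μ ξ := by
  have hint : Integrable
      (fun p : ℝ × ℝ => (triangle (p.2 - t) : ℂ) * Complex.exp (p.2 * p.1 * Complex.I))
      (μ.prod volume) := by
    refine ((integrable_triangle.comp_sub_right t).comp_snd μ).mono' ?_ ?_
    · have htriangle : Continuous fun p : ℝ × ℝ => (triangle (p.2 - t) : ℂ) :=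
        Complex.continuous_ofReal.comp (continuous_triangle.comp (by fun_prop))
      exact (htriangle.mul (by fun_prop)).aestronglyMeasurable
    · refine Eventually.of_forall fun p => ?_
      rw [norm_mul, ← Complex.ofReal_mul, Complex.norm_exp_ofReal_mul_I, mul_one,
        Complex.norm_real, Real.norm_of_nonneg (triangle_nonneg _)]
  rw [charFun_fejerWeighted_eq_integral]
  simp only [fejer_mul_cexp_eq_integral, charFun_apply_real, ← integral_const_mul]
  exact integral_integral_swap hint

lemma fejerWeighted_le : fejerWeighted μ ≤ μ := by
  calc fejerWeighted μ ≤ μ.withDensity 1 := withDensity_mono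
        (Eventually.of_forall fun u => ENNReal.ofReal_le_one.2 (fejer_le_one u))
    _ = μ := withDensity_one

lemma fejerWeighted_real_le {s : Set ℝ} (hs : μ s ≠ ⊤) :
    (fejerWeighted μ).real s ≤ μ.real s :=
  ENNReal.toReal_mono hs (fejerWeighted_le s)

lemma mul_le_fejerWeighted_real {m : ℝ} (hm : 0 ≤ m) {s : Set ℝ} (hs : MeasurableSet s)
    (hsμ : μ s ≠ ⊤) (h : ∀ u ∈ s, m ≤ fejer u) : m * μ.real s ≤ (fejerWeighted μ).real s := by
  have hle : ENNReal.ofReal m * μ s ≤ fejerWeighted μ s := by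
    rw [fejerWeighted, withDensity_apply _ hs, ← setLIntegral_const]
    exact setLIntegral_mono' hs fun u hu => ENNReal.ofReal_le_ofReal (h u hu)
  rw [Measure.real, Measure.real, ← ENNReal.toReal_ofReal hm, ← ENNReal.toReal_mul]
  exact ENNReal.toReal_mono (ne_top_of_le_ne_top hsμ (fejerWeighted_le s)) hle

end FejerWeighted
section LocalLimit

lemma tendsto_of_squeeze_family {ι κ : Type*} {l : Filter ι} {p : Filter κ} [p.NeBot] {f : ι → ℝ}
    {L : ℝ} {lower upper : κ → ℝ} (hlower : Tendsto lower p (𝓝 L)) (hupper : Tendsto upper p (𝓝 L))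
    (h : ∀ᶠ k in p, ∃ u v : ι → ℝ, ∃ a b : ℝ, Tendsto u l (𝓝 a) ∧ Tendsto v l (𝓝 b) ∧
      lower k ≤ a ∧ b ≤ upper k ∧ ∀ᶠ i in l, u i ≤ f i ∧ f i ≤ v i) :
    Tendsto f l (𝓝 L) := by
  refine tendsto_order.2 ⟨fun y hy => ?_, fun y hy => ?_⟩
  · obtain ⟨k, ⟨u, v, a, b, hu, -, ha, -, huv⟩, hk⟩ :=
      (h.and (hlower.eventually_const_lt hy)).exists
    filter_upwards [hu.eventually_const_lt (hk.trans_le ha), huv] with i hi hle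
    exact hi.trans_le hle.1
  · obtain ⟨k, ⟨u, v, a, b, -, hv, -, hb, huv⟩, hk⟩ :=
      (h.and (hupper.eventually_lt_const hy)).exists
    filter_upwards [hv.eventually_lt_const (hb.trans_lt hk), huv] with i hi hle
    exact hle.2.trans_lt hi

lemma exists_pos_forall_Icc_le_fejer {m : ℝ} (hm : m < 1) (a d : ℝ) :
    ∃ ε : ℝ, 0 < ε ∧ ∀ u ∈ Icc (ε * a) (ε * d), m ≤ fejer u := by
  have hnear : ∀ᶠ ε in 𝓝 (0 : ℝ), ∀ u ∈ Icc a d, m < fejer (ε * u) :=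
    isCompact_Icc.eventually_forall_of_forall_eventually fun u _ =>
      Tendsto.eventually_const_lt hm <| Continuous.tendsto'
        (continuous_fejer.comp (by fun_prop)) _ _ (by simp [fejer_zero])
  obtain ⟨ε, hfejer, hε⟩ :=
    ((hnear.filter_mono nhdsWithin_le_nhds).and (self_mem_nhdsWithin (s := Ioi 0))).exists
  refine ⟨ε, hε, fun u hu => ?_⟩
  have hu' := hfejer (u / ε) ⟨(le_div_iff₀' hε).2 hu.1, (div_le_iff₀' hε).2 hu.2⟩
  rw [mul_div_cancel₀ u (ne_of_gt hε)] at hu'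
  exact hu'.le

lemma map_const_mul_real_Icc (ν : Measure ℝ) {ε : ℝ} (hε : 0 < ε) (a d : ℝ) :
    (ν.map (ε * ·)).real (Icc (ε * a) (ε * d)) = ν.real (Icc a d) := by
  rw [map_measureReal_apply (measurable_const_mul ε) measurableSet_Icc,
    preimage_const_mul_Icc₀ _ _ hε, mul_div_cancel_left₀ _ hε.ne', mul_div_cancel_left₀ _ hε.ne']

variable {μ : ℕ → Measure ℝ} [∀ n, IsFiniteMeasure (μ n)] {σ : ℕ → ℝ} {G : ℝ → ℂ} {c : ℝ}
  (hσ : ∀ n, 0 < σ n) (hσ₀ : Tendsto σ atTop (𝓝 0))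
  (hG : ∀ w, Tendsto (fun n => charFun (μ n) (σ n * w)) atTop (𝓝 (G w)))
  (hbound : ∀ Δ : ℝ, ∃ bound : ℝ → ℝ, Integrable bound ∧ ∀ᶠ n in atTop, ∀ w,
    |σ n * w| ≤ Δ → ‖charFun (μ n) (σ n * w)‖ ≤ bound w)

include hσ hσ₀ hG hbound

lemma tendsto_charFun_fejerWeighted (t : ℝ) :
    Tendsto (fun n => ((σ n)⁻¹ : ℂ) * charFun (fejerWeighted (μ n)) t) atTop
      (𝓝 (triangle t * ∫ w, G w)) := by
  have hscale : ∀ n, ((σ n)⁻¹ : ℂ) * charFun (fejerWeighted (μ n)) t =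
      ∫ w : ℝ, (triangle (σ n * w - t) : ℂ) * charFun (μ n) (σ n * w) := fun n => by
    rw [charFun_fejerWeighted, Measure.integral_comp_mul_left
      (fun ξ : ℝ => (triangle (ξ - t) : ℂ) * charFun (μ n) ξ), abs_of_pos (inv_pos.2 (hσ n)),
      Complex.real_smul, Complex.ofReal_inv]
  obtain ⟨bound, hbound_int, hle⟩ := hbound (1 + |t|)
  simp only [hscale, ← integral_const_mul]
  refine tendsto_integral_filter_of_dominated_convergence (fun w => |bound w|) ?_ ?_
    hbound_int.abs ?_
  · refine Eventually.of_forall fun n => Continuous.aestronglyMeasurable ?_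
    exact (Complex.continuous_ofReal.comp (continuous_triangle.comp (by fun_prop))).mul
      (continuous_charFun.comp (by fun_prop))
  · filter_upwards [hle] with n hn
    refine Eventually.of_forall fun w => ?_
    rw [norm_mul, Complex.norm_real, Real.norm_of_nonneg (triangle_nonneg _)]
    by_cases hw : |σ n * w| ≤ 1 + |t|
    · exact (mul_le_of_le_one_left (norm_nonneg _) (triangle_le_one _)).trans
        ((hn w hw).trans (le_abs_self _))
    · have hfar : 1 ≤ |σ n * w - t| := by
        linarith [abs_sub_abs_le_abs_sub (σ n * w) t]
      rw [triangle_eq_zero hfar, zero_mul]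
      exact abs_nonneg _
  · refine Eventually.of_forall fun w => Tendsto.mul ?_ (hG w)
    have harg : Tendsto (fun n => σ n * w - t) atTop (𝓝 (-t)) := by
      simpa using (hσ₀.mul_const w).sub_const t
    rw [← triangle_neg t]
    exact ((Complex.continuous_ofReal.comp continuous_triangle).tendsto _).comp harg

lemma tendsto_fejerWeighted_real_Icc (hc : 0 ≤ c) (hGc : ∫ w, G w = 2 * Real.pi * c) (a d : ℝ) :
    Tendsto (fun n => (σ n)⁻¹ * (fejerWeighted (μ n)).real (Icc a d)) atTop
      (𝓝 (c * (fejerWeighted volume).real (Icc a d))) := by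
  have hchar (t : ℝ) : Tendsto (fun n => charFun ((σ n)⁻¹.toNNReal • fejerWeighted (μ n)) t) atTop
      (𝓝 (charFun (c.toNNReal • fejerWeighted volume) t)) := by
    have hlim : charFun (c.toNNReal • fejerWeighted volume) t = triangle t * ∫ w, G w := by
      rw [charFun_nnreal_smul, charFun_fejerWeighted_volume, hGc, Real.coe_toNNReal c hc]
      ring
    rw [hlim]
    refine (tendsto_charFun_fejerWeighted hσ hσ₀ hG hbound t).congr fun n => ?_
    rw [charFun_nnreal_smul, Real.coe_toNNReal _ (inv_nonneg.2 (hσ n).le), Complex.ofReal_inv]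
  have : NullSingletonClass (c.toNNReal • fejerWeighted volume) := ⟨fun u => by
    rw [Measure.smul_apply, measure_singleton, smul_zero]⟩
  have hreal := tendsto_measureReal_Icc_of_tendsto_charFun hchar a d
  simpa only [measureReal_nnreal_smul_apply, Real.coe_toNNReal c hc,
    Real.coe_toNNReal _ (inv_nonneg.2 (hσ _).le)] using hreal

lemma tendsto_fejerWeighted_map_const_mul_real_Icc (hc : 0 ≤ c)
    (hGc : ∫ w, G w = 2 * Real.pi * c) {ε : ℝ} (hε : 0 < ε) (a d : ℝ) :
    Tendsto (fun n => (σ n)⁻¹ * (fejerWeighted ((μ n).map (ε * ·))).real (Icc a d)) atTop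
      (𝓝 (c * (ε⁻¹ * (fejerWeighted volume).real (Icc a d)))) := by
  have hcharFun (n : ℕ) (w : ℝ) :
      charFun ((μ n).map (ε * ·)) (σ n / ε * w) = charFun (μ n) (σ n * w) := by
    rw [charFun_map_mul]
    congr 1
    field_simp
  have hbound' (Δ : ℝ) : ∃ bound : ℝ → ℝ, Integrable bound ∧ ∀ᶠ n in atTop, ∀ w,
      |σ n / ε * w| ≤ Δ → ‖charFun ((μ n).map (ε * ·)) (σ n / ε * w)‖ ≤ bound w := by
    obtain ⟨bound, hint, hle⟩ := hbound (ε * Δ)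
    refine ⟨bound, hint, hle.mono fun n hn w hw => hcharFun n w ▸ hn w ?_⟩
    rwa [div_mul_eq_mul_div, abs_div, abs_of_pos hε, div_le_iff₀' hε] at hw
  have hweighted := (tendsto_fejerWeighted_real_Icc (μ := fun n => (μ n).map (ε * ·))
    (fun n => div_pos (hσ n) hε) (by simpa using hσ₀.div_const ε)
    (fun w => by simpa only [hcharFun] using hG w) hbound' hc hGc a d).const_mul ε⁻¹
  convert hweighted using 2 with n
  · have hσn := (hσ n).ne'
    field_simp
  · ring

theorem tendsto_measureReal_Icc_of_charFun_scaling (hc : 0 ≤ c)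
    (hGc : ∫ w, G w = 2 * Real.pi * c) {a d : ℝ} (had : a ≤ d) :
    Tendsto (fun n => (σ n)⁻¹ * (μ n).real (Icc a d)) atTop (𝓝 (c * (d - a))) := by
  have hlower : Tendsto (fun m : ℝ => c * (m * (d - a))) (𝓝[<] 1) (𝓝 (c * (d - a))) :=
    (Continuous.tendsto' (by fun_prop) 1 _ (by simp)).mono_left nhdsWithin_le_nhds
  have hupper : Tendsto (fun m : ℝ => c * (d - a) / m) (𝓝[<] 1) (𝓝 (c * (d - a))) := by
    have hcont : ContinuousAt (fun m : ℝ => c * (d - a) / m) 1 := by fun_prop (disch := simp)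
    simpa only [div_one] using hcont.tendsto.mono_left nhdsWithin_le_nhds
  refine tendsto_of_squeeze_family hlower hupper ?_
  filter_upwards [Ioo_mem_nhdsLT zero_lt_one] with m hm
  obtain ⟨ε, hε, hmε⟩ := exists_pos_forall_Icc_le_fejer hm.2 a d
  have hweighted := tendsto_fejerWeighted_map_const_mul_real_Icc hσ hσ₀ hG hbound hc hGc hε
    (ε * a) (ε * d)
  have hvolume : volume.real (Icc (ε * a) (ε * d)) = ε * (d - a) := by
    rw [Real.volume_real_Icc_of_le (by gcongr), mul_sub]
  refine ⟨_, _, _, _, hweighted, hweighted.div_const m, ?_, ?_, Eventually.of_forall fun n => ?_⟩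
  · have hfejer := mul_le_fejerWeighted_real hm.1.le measurableSet_Icc
      (measure_Icc_lt_top (μ := volume)).ne hmε
    rw [hvolume, mul_left_comm] at hfejer
    exact mul_le_mul_of_nonneg_left ((le_inv_mul_iff₀ hε).2 hfejer) hc
  · have hfejer := fejerWeighted_real_le
      (measure_Icc_lt_top (μ := volume) (a := ε * a) (b := ε * d)).ne
    rw [hvolume] at hfejer
    exact div_le_div_of_nonneg_right
      (mul_le_mul_of_nonneg_left ((inv_mul_le_iff₀ hε).2 hfejer) hc) hm.1.le
  · have hσn := inv_nonneg.2 (hσ n).le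
    have hle := fejerWeighted_real_le
      (measure_ne_top ((μ n).map (ε * ·)) (Icc (ε * a) (ε * d)))
    have hge := mul_le_fejerWeighted_real hm.1.le measurableSet_Icc
      (measure_ne_top ((μ n).map (ε * ·)) _) hmε
    rw [map_const_mul_real_Icc _ hε] at hle hge
    rw [le_div_iff₀' hm.1, mul_left_comm]
    exact ⟨mul_le_mul_of_nonneg_left hle hσn, mul_le_mul_of_nonneg_left hge hσn⟩

end LocalLimit
section Growth

/-- The comparison function `(log (1/x))^α x^β e^{γ/x}` of the theorem, without its constant `λ`. -/
noncomputable def growth (α β γ x : ℝ) : ℝ := Real.log (1 / x) ^ α * x ^ β * Real.exp (γ / x)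

variable {α β γ : ℝ}

lemma log_one_div_pos {x : ℝ} (hx : x ∈ Ioo 0 1) : 0 < Real.log (1 / x) :=
  Real.log_pos (one_lt_one_div hx.1 hx.2)

lemma growth_pos {x : ℝ} (hx : x ∈ Ioo 0 1) : 0 < growth α β γ x :=
  mul_pos (mul_pos (Real.rpow_pos_of_pos (log_one_div_pos hx) α) (Real.rpow_pos_of_pos hx.1 β))
    (Real.exp_pos _)

lemma tendsto_log_one_div_nhdsGT_zero :
    Tendsto (fun x : ℝ => Real.log (1 / x)) (𝓝[>] 0) atTop := by
  simp only [one_div]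
  exact Real.tendsto_log_atTop.comp tendsto_inv_nhdsGT_zero

lemma log_one_div_mul {x r : ℝ} (hx : x ≠ 0) (hr : r ≠ 0) :
    Real.log (1 / (x * r)) = Real.log (1 / x) - Real.log r := by
  rw [one_div, one_div, Real.log_inv, Real.log_inv, Real.log_mul hx hr]
  ring

lemma growth_mul_div_growth {x r : ℝ} (hx : x ∈ Ioo 0 1) (hr : 0 < r) (hxr : x * r < 1) :
    growth α β γ (x * r) / growth α β γ x =
      (Real.log (1 / (x * r)) / Real.log (1 / x)) ^ α * r ^ β *
        Real.exp (γ / (x * r) - γ / x) := by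
  have hL := log_one_div_pos hx
  have hLr := log_one_div_pos ⟨mul_pos hx.1 hr, hxr⟩
  have hLα := (Real.rpow_pos_of_pos hL α).ne'
  have hxβ := (Real.rpow_pos_of_pos hx.1 β).ne'
  rw [growth, growth, Real.div_rpow hLr.le hL.le, Real.mul_rpow hx.1.le hr.le, Real.exp_sub]
  field_simp

lemma tendsto_growth_mul_div_growth {θ : ℝ → ℝ} (hθ : Tendsto θ (𝓝[>] 0) (𝓝 1)) :
    Tendsto (fun x => growth α β γ (x * θ x) / growth α β γ x *
      Real.exp (γ / x - γ / (x * θ x))) (𝓝[>] 0) (𝓝 1) := by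
  have hlog : Tendsto (fun x => 1 - Real.log (θ x) / Real.log (1 / x)) (𝓝[>] 0) (𝓝 1) := by
    have hlogθ : Tendsto (fun x => Real.log (θ x)) (𝓝[>] 0) (𝓝 0) := by
      simpa only [Real.log_one] using hθ.log one_ne_zero
    simpa only [sub_zero] using (hlogθ.div_atTop tendsto_log_one_div_nhdsGT_zero).const_sub 1
  have hlim : Tendsto (fun x => (1 - Real.log (θ x) / Real.log (1 / x)) ^ α * θ x ^ β)
      (𝓝[>] 0) (𝓝 1) := by
    simpa only [Real.one_rpow, one_mul] using (hlog.rpow_const (p := α) (.inl one_ne_zero)).mul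
      (hθ.rpow_const (p := β) (.inl one_ne_zero))
  have hxθ : Tendsto (fun x => x * θ x) (𝓝[>] 0) (𝓝 0) := by
    simpa only [zero_mul, id] using (tendsto_id.mono_left nhdsWithin_le_nhds).mul hθ
  refine hlim.congr' ?_
  filter_upwards [Ioo_mem_nhdsGT one_pos, hθ.eventually_const_lt zero_lt_one,
    hxθ.eventually_lt_const zero_lt_one] with x hx hθx hxθx
  rw [growth_mul_div_growth hx hθx hxθx, mul_assoc, ← Real.exp_add,
    log_one_div_mul hx.1.ne' hθx.ne', sub_div, div_self (log_one_div_pos hx).ne']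
  simp

lemma tendsto_one_add_sqrt_mul (v : ℝ) :
    Tendsto (fun x : ℝ => 1 + √x * v) (𝓝[>] 0) (𝓝 1) :=
  (Continuous.tendsto' (by fun_prop) 0 1 (by simp)).mono_left nhdsWithin_le_nhds

lemma tendsto_growth_mul_one_add_sqrt_div_growth (v : ℝ) :
    Tendsto (fun x => Real.exp (γ * v / √x) * (growth α β γ (x * (1 + √x * v)) / growth α β γ x))
      (𝓝[>] 0) (𝓝 (Real.exp (γ * v ^ 2))) := by
  have hθ := tendsto_one_add_sqrt_mul v
  have hexp : Tendsto (fun x : ℝ => Real.exp (γ * v ^ 2 / (1 + √x * v))) (𝓝[>] 0)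
      (𝓝 (Real.exp (γ * v ^ 2))) := by
    have hdiv := (tendsto_const_nhds (x := γ * v ^ 2)).div hθ one_ne_zero
    rw [div_one] at hdiv
    exact hdiv.rexp
  have hmul := (tendsto_growth_mul_div_growth (α := α) (β := β) (γ := γ) hθ).mul hexp
  rw [one_mul] at hmul
  refine hmul.congr' ?_
  filter_upwards [self_mem_nhdsWithin, hθ.eventually_const_lt zero_lt_one] with x hx hθx
  have hexponent : γ / x - γ / (x * (1 + √x * v)) + γ * v ^ 2 / (1 + √x * v) = γ * v / √x := by
    have hsqrt : √x ≠ 0 := (Real.sqrt_pos.2 hx).ne'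
    nth_rw 1 2 [← Real.mul_self_sqrt (le_of_lt hx)]
    field_simp
    ring
  rw [mul_assoc, ← Real.exp_add, hexponent, mul_comm]

lemma rpow_le_rpow_abs_of_mem_Icc {R ρ : ℝ} (hR : 0 < R) (hρ : ρ ∈ Icc R⁻¹ R) (p : ℝ) :
    ρ ^ p ≤ R ^ |p| := by
  have hρ₀ : 0 < ρ := (inv_pos.2 hR).trans_le hρ.1
  rcases le_total 0 p with hp | hp
  · rw [abs_of_nonneg hp]
    exact Real.rpow_le_rpow hρ₀.le hρ.2 hp
  · rw [abs_of_nonpos hp, Real.rpow_neg hR.le, ← Real.inv_rpow hR.le]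
    exact Real.rpow_le_rpow_of_nonpos (inv_pos.2 hR) hρ.1 hp

lemma div_le_sub_mul_sq_sub_one {r R : ℝ} (hγ : 0 ≤ γ) (hr : r ∈ Icc 1 R) :
    γ / r - γ ≤ -(γ / (R * (R + 1)) * (r ^ 2 - 1)) := by
  have hr₀ : 0 < r := zero_lt_one.trans_le hr.1
  have hsq : 0 ≤ r ^ 2 - 1 := by nlinarith [hr.1]
  have hrR := hr.2
  have hR₀ : 0 ≤ R := hr₀.le.trans hrR
  calc γ / r - γ = -(γ / (r * (r + 1)) * (r ^ 2 - 1)) := by field_simp; ring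
    _ ≤ _ := by gcongr

lemma growth_mul_le (hγ : 0 ≤ γ) {R : ℝ} (hR : 1 ≤ R) :
    ∀ᶠ x in 𝓝[>] 0, ∀ r ∈ Icc 1 R, growth α β γ (x * r) ≤
      2 ^ |α| * R ^ |β| * Real.exp (-(γ / (R * (R + 1)) * (r ^ 2 - 1) / x)) *
        growth α β γ x := by
  have hR₀ : 0 < R := zero_lt_one.trans_le hR
  filter_upwards [Ioo_mem_nhdsGT one_pos, Ioo_mem_nhdsGT (inv_pos.2 hR₀),
    tendsto_log_one_div_nhdsGT_zero.eventually_ge_atTop (2 * Real.log R)] with x hx hxR hlogR r hr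
  have hr₀ : 0 < r := zero_lt_one.trans_le hr.1
  have hxr : x * r < 1 := (mul_le_mul_of_nonneg_left hr.2 hx.1.le).trans_lt
    ((lt_inv_mul_iff₀' hR₀).1 (by simpa using hxR.2))
  have hL := log_one_div_pos hx
  have hratio : Real.log (1 / (x * r)) / Real.log (1 / x) ∈ Icc 2⁻¹ 2 := by
    rw [log_one_div_mul hx.1.ne' hr₀.ne']
    have hlogr := Real.log_nonneg hr.1
    have hlogrR := Real.log_le_log hr₀ hr.2
    constructor
    · rw [le_div_iff₀ hL]
      linarith
    · rw [div_le_iff₀ hL]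
      linarith
  have hexp : γ / (x * r) - γ / x ≤ -(γ / (R * (R + 1)) * (r ^ 2 - 1) / x) := by
    calc γ / (x * r) - γ / x = (γ / r - γ) / x := by ring
      _ ≤ -(γ / (R * (R + 1)) * (r ^ 2 - 1)) / x :=
        div_le_div_of_nonneg_right (div_le_sub_mul_sq_sub_one hγ hr) hx.1.le
      _ = _ := neg_div _ _
  rw [← div_le_iff₀ (growth_pos hx), growth_mul_div_growth hx hr₀ hxr]
  gcongr
  · exact rpow_le_rpow_abs_of_mem_Icc two_pos hratio α
  · exact rpow_le_rpow_abs_of_mem_Icc hR₀ ⟨(inv_le_one_of_one_le₀ hR).trans hr.1, hr.2⟩ β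

end Growth
section TiltedMeasure

/-- The mass `b k e^{-xk} / N` that the coefficient `b k` receives in `tiltedMeasure b N m x`. -/
noncomputable def tiltedWeight (b : ℕ → ℝ) (N x : ℝ) (k : ℕ) : ℝ := b k * Real.exp (-x * k) / N

/-- The coefficients of `∑ b k q^k` tilted to `q = e^{-x}`, as a measure with `b k` placed at
`x k - m` and with normalizing constant `N`. -/
noncomputable def tiltedMeasure (b : ℕ → ℝ) (N m x : ℝ) : Measure ℝ :=
  Measure.sum fun k : ℕ => ENNReal.ofReal (tiltedWeight b N x k) • Measure.dirac (x * k - m)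

variable {b : ℕ → ℝ} {N m x : ℝ}

lemma mul_sub_mem_Icc_of_mem_Ico (hx : 0 < x) {n k : ℕ} {η : ℝ} (hη : 0 ≤ η)
    (hk : k ∈ Finset.Ico n (n + (⌊η / x⌋₊ + 1))) : x * k - x * n ∈ Icc 0 η := by
  obtain ⟨hnk, hkη⟩ := Finset.mem_Ico.1 hk
  have hcast : (n : ℝ) ≤ k := Nat.cast_le.2 hnk
  rw [← mul_sub]
  refine ⟨mul_nonneg hx.le (sub_nonneg.2 hcast), ?_⟩
  rw [← le_div_iff₀' hx, ← Nat.cast_sub hnk]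
  exact (Nat.le_floor_iff (by positivity)).1 (by omega)

lemma mem_Icc_of_mul_sub_mem_Icc_neg (hx : 0 < x) {n k : ℕ} {η : ℝ}
    (hk : x * k - x * n ∈ Icc (-η) 0) : k ∈ Finset.Icc (n - ⌊η / x⌋₊) n := by
  rw [← mul_sub] at hk
  have hkn : k ≤ n := by
    have := nonpos_of_mul_nonpos_right hk.2 hx
    exact_mod_cast sub_nonpos.1 this
  have hfloor : n - k ≤ ⌊η / x⌋₊ := Nat.le_floor <| by
    rw [le_div_iff₀' hx, Nat.cast_sub hkn]
    linarith [hk.1]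
  exact Finset.mem_Icc.2 ⟨by omega, hkn⟩

lemma tiltedWeight_nonneg (hb : ∀ n, 0 ≤ b n) (hN : 0 ≤ N) (k : ℕ) : 0 ≤ tiltedWeight b N x k :=
  div_nonneg (mul_nonneg (hb k) (Real.exp_nonneg _)) hN

lemma summable_mul_exp_neg (hradius : ∀ q : ℝ, |q| < 1 → Summable fun n : ℕ => b n * q ^ n)
    (hx : 0 < x) : Summable fun n : ℕ => b n * Real.exp (-x * n) := by
  refine (hradius (Real.exp (-x)) (by simpa using hx)).congr fun n => ?_
  rw [← Real.exp_nat_mul, mul_comm (n : ℝ)]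

lemma integrable_exp_mul_tiltedMeasure (hb : ∀ n, 0 ≤ b n) (hN : 0 ≤ N)
    (hradius : ∀ q : ℝ, |q| < 1 → Summable fun n : ℕ => b n * q ^ n) (hx : 0 < x) {t : ℝ}
    (ht : t < 1) : Integrable (fun u => Real.exp (t * u)) (tiltedMeasure b N m x) := by
  refine (integrable_sum_dirac_iff fun _ => ENNReal.ofReal_ne_top).2 ?_
  refine ((summable_mul_exp_neg hradius (mul_pos hx (sub_pos.2 ht))).mul_right
    (Real.exp (-t * m) / N)).congr fun k => ?_
  rw [ENNReal.toReal_ofReal (tiltedWeight_nonneg hb hN k), Real.norm_of_nonneg (Real.exp_nonneg _),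
    tiltedWeight, mul_div_assoc', mul_assoc, ← Real.exp_add, div_mul_eq_mul_div, mul_assoc,
    ← Real.exp_add]
  ring_nf

lemma isFiniteMeasure_tiltedMeasure (hb : ∀ n, 0 ≤ b n) (hN : 0 ≤ N)
    (hradius : ∀ q : ℝ, |q| < 1 → Summable fun n : ℕ => b n * q ^ n) (hx : 0 < x) :
    IsFiniteMeasure (tiltedMeasure b N m x) := by
  have hconst := integrable_exp_mul_tiltedMeasure (m := m) hb hN hradius hx one_pos
  simp only [zero_mul, Real.exp_zero] at hconst
  exact (integrable_const_iff.1 hconst).resolve_left one_ne_zero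

lemma complexMGF_tiltedMeasure (hb : ∀ n, 0 ≤ b n) (hN : 0 ≤ N) (z : ℂ) :
    complexMGF id (tiltedMeasure b N m x) z =
      Complex.exp (-z * m) * (∑' n : ℕ, (b n : ℂ) * Complex.exp (-(x * (1 - z)) * n)) / N := by
  rw [complexMGF, tiltedMeasure, integral_sum_dirac fun _ => ENNReal.ofReal_ne_top,
    mul_div_right_comm, ← tsum_mul_left]
  refine tsum_congr fun k => ?_
  rw [ENNReal.toReal_ofReal (tiltedWeight_nonneg hb hN k), Complex.real_smul, tiltedWeight,
    div_mul_eq_mul_div, mul_left_comm, ← Complex.exp_add]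
  push_cast
  rw [div_mul_eq_mul_div, mul_assoc, ← Complex.exp_add, id]
  push_cast
  ring_nf

lemma hasSum_tiltedMeasure_real (hb : ∀ n, 0 ≤ b n) (hN : 0 ≤ N)
    (hradius : ∀ q : ℝ, |q| < 1 → Summable fun n : ℕ => b n * q ^ n) (hx : 0 < x) {s : Set ℝ}
    (hs : MeasurableSet s) :
    HasSum (fun k : ℕ => tiltedWeight b N x k * s.indicator 1 (x * k - m))
      ((tiltedMeasure b N m x).real s) := by
  have := isFiniteMeasure_tiltedMeasure (m := m) hb hN hradius hx
  have hint : Integrable (s.indicator (1 : ℝ → ℝ)) (tiltedMeasure b N m x) :=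
    (integrable_const 1).indicator hs
  rw [← integral_indicator_one hs]
  refine (hasSum_integral_sum_dirac (fun _ => ENNReal.ofReal_ne_top)
    ((integrable_sum_dirac_iff fun _ => ENNReal.ofReal_ne_top).1 hint)).congr_fun fun k => ?_
  rw [ENNReal.toReal_ofReal (tiltedWeight_nonneg hb hN k), smul_eq_mul]

variable (hb : ∀ n, 0 ≤ b n) (hmono : Monotone b) (hN : 0 ≤ N)

include hmono hN in
lemma tiltedWeight_mul_exp_neg_le {η : ℝ} {j k : ℕ} (hjk : j ≤ k) (h : x * k - x * j ≤ η)
    (hbk : 0 ≤ b k) :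
    tiltedWeight b N x j * Real.exp (-η) ≤ tiltedWeight b N x k := by
  rw [tiltedWeight, tiltedWeight, div_mul_eq_mul_div, mul_assoc, ← Real.exp_add]
  gcongr
  · exact hmono hjk
  · linarith

include hb hmono hN in
lemma mul_tiltedWeight_le_tiltedMeasure_real_Icc
    (hradius : ∀ q : ℝ, |q| < 1 → Summable fun n : ℕ => b n * q ^ n) (hx : 0 < x) {n : ℕ}
    (hn : x * n = m) {η : ℝ} (hη : 0 ≤ η) :
    η * Real.exp (-η) * (tiltedWeight b N x n / x) ≤ (tiltedMeasure b N m x).real (Icc 0 η) := by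
  set J := ⌊η / x⌋₊
  have hterm : ∀ k ∈ Finset.Ico n (n + (J + 1)), tiltedWeight b N x n * Real.exp (-η) ≤
      tiltedWeight b N x k * (Icc 0 η).indicator 1 (x * k - m) := by
    intro k hk
    have hmem := mul_sub_mem_Icc_of_mem_Ico hx hη hk
    rw [← hn, indicator_of_mem hmem, Pi.one_apply, mul_one]
    exact tiltedWeight_mul_exp_neg_le hmono hN (Finset.mem_Ico.1 hk).1 hmem.2 (hb k)
  have hJ : η / x ≤ (J + 1 : ℕ) := by
    push_cast
    exact (Nat.lt_floor_add_one _).le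
  have hw := tiltedWeight_nonneg (x := x) hb hN
  calc η * Real.exp (-η) * (tiltedWeight b N x n / x)
      = η / x * (tiltedWeight b N x n * Real.exp (-η)) := by ring
    _ ≤ (J + 1 : ℕ) * (tiltedWeight b N x n * Real.exp (-η)) := by
        have := hw n
        gcongr
    _ ≤ ∑ k ∈ Finset.Ico n (n + (J + 1)),
          tiltedWeight b N x k * (Icc 0 η).indicator 1 (x * k - m) := by
        simpa using Finset.card_nsmul_le_sum _ _ _ hterm
    _ ≤ (tiltedMeasure b N m x).real (Icc 0 η) :=
        sum_le_hasSum _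
          (fun k _ => mul_nonneg (hw k) (indicator_nonneg (fun _ _ => zero_le_one) _))
          (hasSum_tiltedMeasure_real hb hN hradius hx measurableSet_Icc)

include hb hmono hN in
lemma tiltedMeasure_real_Icc_le_mul_tiltedWeight
    (hradius : ∀ q : ℝ, |q| < 1 → Summable fun n : ℕ => b n * q ^ n) (hx : 0 < x) {n : ℕ}
    (hn : x * n = m) {η : ℝ} (hη : 0 ≤ η) :
    (tiltedMeasure b N m x).real (Icc (-η) 0) ≤
      (η + x) * Real.exp η * (tiltedWeight b N x n / x) := by
  set J := ⌊η / x⌋₊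
  have hw := tiltedWeight_nonneg (x := x) hb hN
  have hterm : ∀ k ∈ Finset.Icc (n - J) n,
      tiltedWeight b N x k * (Icc (-η) 0).indicator 1 (x * k - m) ≤
        tiltedWeight b N x n * Real.exp η := by
    intro k hk
    by_cases hkη : x * k - m ∈ Icc (-η) 0
    · have hle := tiltedWeight_mul_exp_neg_le (x := x) (η := η) hmono hN (Finset.mem_Icc.1 hk).2
        (by linarith [hkη.1]) (hb n)
      rwa [Real.exp_neg, mul_inv_le_iff₀ (Real.exp_pos η), ← mul_one (tiltedWeight b N x k),
        ← Pi.one_apply (M := fun _ : ℝ => ℝ) (x * k - m), ← indicator_of_mem hkη 1] at hle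
    · rw [indicator_of_notMem hkη, mul_zero]
      exact mul_nonneg (hw n) (Real.exp_nonneg _)
  have hcard : ((n + 1 - (n - J) : ℕ) : ℝ) ≤ η / x + 1 := by
    calc ((n + 1 - (n - J) : ℕ) : ℝ) ≤ (J + 1 : ℕ) := Nat.cast_le.2 (by omega)
      _ ≤ η / x + 1 := by
        push_cast
        gcongr
        exact Nat.floor_le (by positivity)
  have hsum := hasSum_tiltedMeasure_real (m := m) hb hN hradius hx
    (measurableSet_Icc (a := -η) (b := 0))
  calc (tiltedMeasure b N m x).real (Icc (-η) 0)
      = ∑ k ∈ Finset.Icc (n - J) n,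
          tiltedWeight b N x k * (Icc (-η) 0).indicator 1 (x * k - m) :=
        hsum.unique (hasSum_sum_of_ne_finset_zero fun k hk => by
          rw [indicator_of_notMem fun h => hk (mem_Icc_of_mul_sub_mem_Icc_neg hx (hn ▸ h)),
            mul_zero])
    _ ≤ (n + 1 - (n - J) : ℕ) * (tiltedWeight b N x n * Real.exp η) := by
        simpa using Finset.sum_le_card_nsmul _ _ _ hterm
    _ ≤ (η / x + 1) * (tiltedWeight b N x n * Real.exp η) := by
        have := hw n
        gcongr
    _ = _ := by field_simp

end TiltedMeasure

section SaddlePointAsymptotics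

variable {γ n : ℝ}

lemma div_sqrt_div (hγ : 0 < γ) (hn : 0 < n) : γ / √(γ / n) = √(γ * n) := by
  rw [div_eq_iff (Real.sqrt_pos.2 (div_pos hγ hn)).ne', ← Real.sqrt_mul (by positivity)]
  rw [mul_assoc, mul_div_cancel₀ _ hn.ne', Real.sqrt_mul_self hγ.le]

lemma sqrt_div_mul_self (hγ : 0 < γ) (hn : 0 < n) : √(γ / n) * n = γ / √(γ / n) := by
  have hdiv := div_pos hγ hn
  rw [eq_div_iff (Real.sqrt_pos.2 hdiv).ne', mul_right_comm, Real.mul_self_sqrt hdiv.le,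
    div_mul_cancel₀ _ hn.ne']

lemma log_one_div_sqrt_div (hγ : 0 < γ) (hn : 0 < n) :
    Real.log (1 / √(γ / n)) = (Real.log n - Real.log γ) / 2 := by
  rw [one_div, Real.log_inv, Real.log_sqrt (by positivity), Real.log_div hγ.ne' hn.ne']
  ring

lemma sqrt_div_rpow_mul_sqrt_mul_self (hγ : 0 < γ) (hn : 0 < n) (β : ℝ) :
    √(γ / n) ^ β * (√√(γ / n) * √(γ / n)) =
      √γ * γ ^ (β / 2 + 1 / 4) / n ^ (β / 2 + 3 / 4) := by
  have hdiv := div_pos hγ hn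
  calc √(γ / n) ^ β * (√√(γ / n) * √(γ / n)) = (γ / n) ^ (β / 2 + 3 / 4) := by
        simp only [Real.sqrt_eq_rpow, ← Real.rpow_mul hdiv.le, ← Real.rpow_add hdiv]
        ring_nf
    _ = √γ * γ ^ (β / 2 + 1 / 4) / n ^ (β / 2 + 3 / 4) := by
        rw [Real.div_rpow hγ.le hn.le, Real.sqrt_eq_rpow, ← Real.rpow_add hγ]
        ring_nf

lemma growth_sqrt_div_mul (hγ : 0 < γ) (hn : 1 < n) (hnγ : γ < n) (α β : ℝ) :
    growth α β γ √(γ / n) * Real.exp √(γ * n) * (√√(γ / n) * √(γ / n)) =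
      ((Real.log n - Real.log γ) / Real.log n) ^ α *
        (√γ * γ ^ (β / 2 + 1 / 4) * Real.log n ^ α / (2 ^ α * n ^ (β / 2 + 3 / 4)) *
          Real.exp (2 * √(γ * n))) := by
  have hn₀ : 0 < n := hγ.trans hnγ
  have hlog : 0 < Real.log n := Real.log_pos hn
  have hlogγ : 0 ≤ Real.log n - Real.log γ := sub_nonneg.2 (Real.log_le_log hγ hnγ.le)
  have hlogα := (Real.rpow_pos_of_pos hlog α).ne'
  calc growth α β γ √(γ / n) * Real.exp √(γ * n) * (√√(γ / n) * √(γ / n))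
      = Real.log (1 / √(γ / n)) ^ α * (√(γ / n) ^ β * (√√(γ / n) * √(γ / n))) *
          Real.exp (2 * √(γ * n)) := by
        rw [growth, div_sqrt_div hγ hn₀, two_mul, Real.exp_add]
        ring
    _ = _ := by
        rw [sqrt_div_rpow_mul_sqrt_mul_self hγ hn₀, log_one_div_sqrt_div hγ hn₀,
          Real.div_rpow hlogγ zero_le_two, Real.div_rpow hlogγ hlog.le]
        field_simp

lemma div_eq_tiltedWeight_div_mul (b : ℕ → ℝ) {lam : ℝ} (hγ : 0 < γ) {n : ℕ}
    (hn : 1 < (n : ℝ)) (hnγ : γ < n) (α β : ℝ) :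
    b n / (lam * γ ^ (β / 2 + 1 / 4) * Real.log n ^ α /
        (2 ^ (α + 1) * √Real.pi * (n : ℝ) ^ (β / 2 + 3 / 4)) * Real.exp (2 * √(γ * n))) =
      tiltedWeight b (growth α β γ √(γ / n)) √(γ / n) n / (√√(γ / n) * √(γ / n)) /
        (lam / (2 * √(Real.pi * γ))) * ((Real.log n - Real.log γ) / Real.log n) ^ α := by
  have hn₀ : (0 : ℝ) < n := hγ.trans hnγ
  have hratio : ((Real.log n - Real.log γ) / Real.log n) ^ α ≠ 0 :=
    (Real.rpow_pos_of_pos (div_pos (sub_pos.2 (Real.log_lt_log hγ hnγ)) (Real.log_pos hn)) α).ne'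
  have hweight : tiltedWeight b (growth α β γ √(γ / n)) √(γ / n) n / (√√(γ / n) * √(γ / n)) =
      b n / (growth α β γ √(γ / n) * Real.exp √(γ * n) * (√√(γ / n) * √(γ / n))) := by
    rw [tiltedWeight, neg_mul, sqrt_div_mul_self hγ hn₀, div_sqrt_div hγ hn₀, Real.exp_neg]
    ring
  rw [hweight, growth_sqrt_div_mul hγ hn hnγ, Real.sqrt_mul Real.pi_pos.le,
    Real.rpow_add_one two_ne_zero]
  field_simp

lemma tendsto_log_sub_div_log_rpow (a α : ℝ) :
    Tendsto (fun n : ℕ => ((Real.log n - a) / Real.log n) ^ α) atTop (𝓝 1) := by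
  have hlog : Tendsto (fun n : ℕ => Real.log n) atTop atTop :=
    Real.tendsto_log_atTop.comp tendsto_natCast_atTop_atTop
  have hlim := ((hlog.const_div_atTop a).const_sub 1).rpow_const (p := α) (.inl (by simp))
  rw [sub_zero, Real.one_rpow] at hlim
  refine hlim.congr' ?_
  filter_upwards [hlog.eventually_gt_atTop 0] with n hn
  rw [sub_div, div_self hn.ne']

end SaddlePointAsymptotics
section SaddlePoint

/-- The tilted measure at `q = e^{-x}` normalized by the size of `∑ b k q^k`, and centred at the
saddle point `k = γ / x ^ 2` of `2 √(γ k) - x k`. -/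
noncomputable abbrev saddleMeasure (b : ℕ → ℝ) (α β γ x : ℝ) : Measure ℝ :=
  tiltedMeasure b (growth α β γ x) (γ / x) x

variable {b : ℕ → ℝ} (hb : ∀ n, 0 ≤ b n)
  (hradius : ∀ q : ℝ, |q| < 1 → Summable fun n : ℕ => b n * q ^ n)
  {lam α β γ : ℝ}
  (hreal : Tendsto (fun t : ℝ => (∑' n : ℕ, b n * Real.exp (-t * n)) / growth α β γ t)
    (𝓝[>] 0) (𝓝 lam))
  (hangle : ∀ Δ : ℝ, 0 < Δ → ∃ C δ : ℝ, 0 < C ∧ 0 < δ ∧ ∀ z : ℂ, 0 < z.re →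
    |z.im| ≤ Δ * z.re → ‖z‖ < δ →
      ‖∑' n : ℕ, (b n : ℂ) * Complex.exp (-z * n)‖ ≤ C * growth α β γ ‖z‖)

include hb in
lemma mgf_tiltedMeasure {N : ℝ} (hN : 0 ≤ N) (m x t : ℝ) :
    mgf id (tiltedMeasure b N m x) t =
      Real.exp (-t * m) * (∑' n : ℕ, b n * Real.exp (-(x * (1 - t)) * n)) / N := by
  have hcomplex := complexMGF_tiltedMeasure (m := m) (x := x) hb hN t
  rw [complexMGF_ofReal] at hcomplex
  exact_mod_cast hcomplex

include hb hreal in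
lemma tendsto_mgf_sqrt_mul_saddleMeasure (v : ℝ) :
    Tendsto (fun x => mgf (fun u => √x * u) (saddleMeasure b α β γ x) v) (𝓝[>] 0)
      (𝓝 (lam * Real.exp (γ * v ^ 2))) := by
  have hθ := tendsto_one_add_sqrt_mul (-v)
  have hxθ : Tendsto (fun x : ℝ => x * (1 + √x * -v)) (𝓝[>] 0) (𝓝[>] 0) := by
    refine tendsto_nhdsWithin_iff.2
      ⟨(Continuous.tendsto' (by fun_prop) 0 0 (by simp)).mono_left nhdsWithin_le_nhds, ?_⟩
    filter_upwards [self_mem_nhdsWithin, hθ.eventually_const_lt zero_lt_one] with x hx hθx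
    exact mul_pos hx hθx
  have hlim := (hreal.comp hxθ).mul
    (tendsto_growth_mul_one_add_sqrt_div_growth (α := α) (β := β) (γ := γ) (-v))
  rw [neg_sq] at hlim
  refine hlim.congr' ?_
  filter_upwards [Ioo_mem_nhdsGT one_pos,
    hxθ.eventually (Ioo_mem_nhdsGT (one_pos (α := ℝ)))] with x hx hxθx
  have hexponent : γ * -v / √x = -(√x * v) * (γ / x) := by
    have hsqrt : √x ≠ 0 := (Real.sqrt_pos.2 hx.1).ne'
    nth_rw 3 [← Real.mul_self_sqrt hx.1.le]
    field_simp
  have hgrowth := (growth_pos (α := α) (β := β) (γ := γ) hxθx).ne'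
  have hmgf : mgf (fun u => √x * u) (saddleMeasure b α β γ x) v =
      mgf id (saddleMeasure b α β γ x) (√x * v) := mgf_const_mul _
  rw [hmgf, mgf_tiltedMeasure hb (growth_pos hx).le, Function.comp_apply, hexponent,
    sub_eq_add_neg 1 (√x * v), ← mul_neg]
  generalize growth α β γ (x * (1 + √x * -v)) = A at hgrowth ⊢
  field_simp

include hb hradius hreal in
lemma tendsto_charFun_saddleMeasure (w : ℝ) :
    Tendsto (fun x => charFun (saddleMeasure b α β γ x) (√x * w)) (𝓝[>] 0)
      (𝓝 (lam * Complex.exp (-γ * w ^ 2))) := by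
  have hint : ∀ᶠ x in 𝓝[>] 0,
      Integrable (fun u => Real.exp (1 * (√x * u))) (saddleMeasure b α β γ x) ∧
        Integrable (fun u => Real.exp (-1 * (√x * u))) (saddleMeasure b α β γ x) := by
    filter_upwards [Ioo_mem_nhdsGT one_pos] with x hx
    have hsqrt : √x < 1 := (Real.sqrt_lt' one_pos).2 (by simpa using hx.2)
    simp only [← mul_assoc]
    exact ⟨integrable_exp_mul_tiltedMeasure hb (growth_pos hx).le hradius hx.1 (by simpa),
      integrable_exp_mul_tiltedMeasure hb (growth_pos hx).le hradius hx.1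
        (by linarith [Real.sqrt_nonneg x])⟩
  have hlim := tendsto_complexMGF_of_tendsto_mgf one_pos hint
    (g := fun z => lam * Complex.exp (γ * z ^ 2)) (by fun_prop)
    (fun t _ => by
      have hmgf := (Complex.continuous_ofReal.tendsto _).comp
        (tendsto_mgf_sqrt_mul_saddleMeasure hb hreal t)
      push_cast at hmgf
      exact hmgf)
    (z := w * Complex.I) (by simp)
  have hsq : (γ : ℂ) * (w * Complex.I) ^ 2 = -γ * w ^ 2 := by
    rw [mul_pow, Complex.I_sq]
    ring
  simp only [hsq] at hlim
  refine hlim.congr fun x => ?_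
  rw [complexMGF_mul_I (by fun_prop), charFun_map_mul]

include hb hangle in
lemma exists_norm_charFun_saddleMeasure_le (hγ : 0 < γ) {Δ : ℝ} (hΔ : 0 < Δ) :
    ∃ C κ : ℝ, 0 < κ ∧ ∀ᶠ x in 𝓝[>] 0, ∀ s : ℝ, |s| ≤ Δ →
      ‖charFun (saddleMeasure b α β γ x) s‖ ≤ C * Real.exp (-(κ * s ^ 2 / x)) := by
  obtain ⟨C, δ, hC, hδ, hle⟩ := hangle Δ hΔ
  set R := √(1 + Δ ^ 2)
  have hR : 1 ≤ R := Real.one_le_sqrt.2 (by nlinarith)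
  have hR₀ : 0 < R := zero_lt_one.trans_le hR
  refine ⟨C * (2 ^ |α| * R ^ |β|), γ / (R * (R + 1)), by positivity, ?_⟩
  filter_upwards [growth_mul_le (α := α) (β := β) hγ.le hR, Ioo_mem_nhdsGT one_pos,
    Ioo_mem_nhdsGT (div_pos hδ hR₀)] with x hgrowth hx hxδ s hs
  have hr : √(1 + s ^ 2) ∈ Icc 1 R := ⟨Real.one_le_sqrt.2 (by nlinarith),
    Real.sqrt_le_sqrt (by linarith [sq_le_sq' (abs_le.1 hs).1 (abs_le.1 hs).2])⟩
  set z : ℂ := x * (1 - s * Complex.I)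
  have hz : ‖z‖ = x * √(1 + s ^ 2) := by
    rw [norm_mul, Complex.norm_real, Real.norm_of_nonneg hx.1.le, Complex.norm_def,
      Complex.normSq_apply]
    congr 2
    simp [sq]
  have hseries := hle z (by simpa [z] using hx.1)
    (by simpa [z, abs_mul, abs_of_pos hx.1, mul_comm] using
      mul_le_mul_of_nonneg_left hs hx.1.le)
    (by
      rw [hz]
      exact (mul_le_mul_of_nonneg_left hr.2 hx.1.le).trans_lt ((lt_div_iff₀ hR₀).1 hxδ.2))
  rw [← complexMGF_id_mul_I, complexMGF_tiltedMeasure hb (growth_pos hx).le, norm_div, norm_mul,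
    Complex.norm_exp, Complex.norm_real, Real.norm_of_nonneg (growth_pos hx).le,
    div_le_iff₀ (growth_pos hx)]
  calc _ = ‖∑' n : ℕ, (b n : ℂ) * Complex.exp (-z * n)‖ := by simp [z]
    _ ≤ C * growth α β γ (x * √(1 + s ^ 2)) := hz ▸ hseries
    _ ≤ C * (2 ^ |α| * R ^ |β| * Real.exp (-(γ / (R * (R + 1)) * s ^ 2 / x)) *
          growth α β γ x) := by
        have hgr := hgrowth _ hr
        rw [Real.sq_sqrt (by positivity), add_sub_cancel_left] at hgr
        gcongr
    _ = _ := by ring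

lemma integral_const_mul_cexp_neg_mul_sq (hγ : 0 < γ) :
    ∫ w : ℝ, (lam : ℂ) * Complex.exp (-γ * w ^ 2) =
      2 * Real.pi * (lam / (2 * √(Real.pi * γ)) : ℝ) := by
  have hgauss : ∫ w : ℝ, (lam : ℂ) * Complex.exp (-γ * w ^ 2) = (lam * √(Real.pi / γ) : ℝ) := by
    rw [← integral_gaussian, ← integral_const_mul, ← integral_complex_ofReal]
    push_cast
    rfl
  have hsqrt : √(Real.pi / γ) = Real.pi / √(Real.pi * γ) := by
    rw [Real.sqrt_div Real.pi_pos.le, Real.sqrt_mul Real.pi_pos.le]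
    nth_rw 2 [← Real.mul_self_sqrt Real.pi_pos.le]
    have := Real.pi_pos
    field_simp
  rw [hgauss, hsqrt]
  push_cast
  ring

include hb hradius hreal hangle in
lemma tendsto_saddleMeasure_real_Icc (hlam : 0 ≤ lam) (hγ : 0 < γ) {x : ℕ → ℝ}
    (hx : ∀ n, x n ∈ Ioo 0 1) (hx₀ : Tendsto x atTop (𝓝[>] 0)) {a d : ℝ} (had : a ≤ d) :
    Tendsto (fun n => (√(x n))⁻¹ * (saddleMeasure b α β γ (x n)).real (Icc a d)) atTop
      (𝓝 (lam / (2 * √(Real.pi * γ)) * (d - a))) := by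
  have (n : ℕ) : IsFiniteMeasure (saddleMeasure b α β γ (x n)) :=
    isFiniteMeasure_tiltedMeasure hb (growth_pos (hx n)).le hradius (hx n).1
  refine tendsto_measureReal_Icc_of_charFun_scaling (fun n => Real.sqrt_pos.2 (hx n).1)
    ((Real.continuous_sqrt.tendsto' 0 0 Real.sqrt_zero).comp
      (hx₀.mono_right nhdsWithin_le_nhds))
    (fun w => (tendsto_charFun_saddleMeasure hb hradius hreal w).comp hx₀) (fun Δ => ?_)
    (by positivity) (integral_const_mul_cexp_neg_mul_sq hγ) had
  obtain ⟨C, κ, hκ, hle⟩ := exists_norm_charFun_saddleMeasure_le hb hangle hγ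
    (zero_lt_one.trans_le (le_max_right Δ 1))
  refine ⟨fun w => C * Real.exp (-κ * w ^ 2), (integrable_exp_neg_mul_sq hκ).const_mul C, ?_⟩
  filter_upwards [hx₀.eventually hle] with n hn w hw
  refine (hn _ (hw.trans (le_max_left _ _))).trans_eq ?_
  rw [mul_pow, Real.sq_sqrt (hx n).1.le, mul_div_assoc, mul_div_cancel_left₀ _ (hx n).1.ne',
    neg_mul]

include hb hradius hreal hangle in
lemma tendsto_tiltedWeight_growth (hmono : Monotone b) (hlam : 0 ≤ lam) (hγ : 0 < γ)
    {x : ℕ → ℝ} (hx : ∀ n, x n ∈ Ioo 0 1) (hx₀ : Tendsto x atTop (𝓝[>] 0)) {k : ℕ → ℕ}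
    (hk : ∀ n, x n * k n = γ / x n) :
    Tendsto (fun n => tiltedWeight b (growth α β γ (x n)) (x n) (k n) / (√(x n) * x n)) atTop
      (𝓝 (lam / (2 * √(Real.pi * γ)))) := by
  set c := lam / (2 * √(Real.pi * γ))
  have hlower : Tendsto (fun η => c * Real.exp (-η)) (𝓝[>] 0) (𝓝 c) :=
    (Continuous.tendsto' (by fun_prop) 0 c (by simp)).mono_left nhdsWithin_le_nhds
  have hupper : Tendsto (fun η => c * Real.exp η) (𝓝[>] 0) (𝓝 c) :=
    (Continuous.tendsto' (by fun_prop) 0 c (by simp)).mono_left nhdsWithin_le_nhds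
  refine tendsto_of_squeeze_family hlower hupper ?_
  filter_upwards [self_mem_nhdsWithin] with η (hη : 0 < η)
  have hmass {a d : ℝ} (had : a ≤ d) : Tendsto
      (fun n => (√(x n))⁻¹ * (saddleMeasure b α β γ (x n)).real (Icc a d)) atTop
        (𝓝 (c * (d - a))) :=
    tendsto_saddleMeasure_real_Icc hb hradius hreal hangle hlam hγ hx hx₀ had
  have hleft : Tendsto (fun n => (η + x n) * Real.exp η) atTop (𝓝 (η * Real.exp η)) := by
    simpa only [add_zero] using
      ((hx₀.mono_right nhdsWithin_le_nhds).const_add η).mul_const (Real.exp η)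
  refine ⟨_, _, _, _, (hmass (neg_nonpos.2 hη.le)).div hleft (by positivity),
    (hmass hη.le).div_const (η * Real.exp (-η)), ?_, ?_, Eventually.of_forall fun n => ?_⟩
  · rw [zero_sub, neg_neg, Real.exp_neg]
    field_simp
    exact le_rfl
  · rw [sub_zero, Real.exp_neg]
    field_simp
    exact le_rfl
  · have hxn := (hx n).1
    have hσ := inv_nonneg.2 (Real.sqrt_nonneg (x n))
    have hN := (growth_pos (α := α) (β := β) (γ := γ) (hx n)).le
    have hle := tiltedMeasure_real_Icc_le_mul_tiltedWeight hb hmono hN hradius hxn (hk n) hη.le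
    have hge := mul_tiltedWeight_le_tiltedMeasure_real_Icc hb hmono hN hradius hxn (hk n) hη.le
    rw [div_mul_eq_div_div_swap, div_eq_inv_mul _ √(x n), Pi.div_apply,
      div_le_iff₀' (by positivity), le_div_iff₀' (by positivity), mul_left_comm,
      mul_left_comm _ (√(x n))⁻¹]
    exact ⟨mul_le_mul_of_nonneg_left hle hσ, mul_le_mul_of_nonneg_left hge hσ⟩

include hb hradius hreal hangle in
lemma tendsto_tiltedWeight_growth_sqrt_div (hmono : Monotone b) (hlam : 0 ≤ lam) (hγ : 0 < γ) :
    Tendsto (fun n : ℕ => tiltedWeight b (growth α β γ √(γ / n)) √(γ / n) n /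
      (√√(γ / n) * √(γ / n))) atTop (𝓝 (lam / (2 * √(Real.pi * γ)))) := by
  have hx₀ : Tendsto (fun n : ℕ => √(γ / n)) atTop (𝓝[>] 0) := by
    refine tendsto_nhdsWithin_iff.2 ⟨?_, ?_⟩
    · simpa only [Real.sqrt_zero] using
        (tendsto_natCast_atTop_atTop.const_div_atTop γ).sqrt
    · filter_upwards [eventually_gt_atTop 0] with n hn
      exact Real.sqrt_pos.2 (div_pos hγ (Nat.cast_pos.2 hn))
  obtain ⟨K, hK⟩ := eventually_atTop.1
    ((eventually_gt_atTop 0).and (hx₀.eventually (Ioo_mem_nhdsGT one_pos)))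
  refine (tendsto_add_atTop_iff_nat K).1 <| tendsto_tiltedWeight_growth hb hradius hreal hangle
    hmono hlam hγ (fun n => (hK (n + K) (Nat.le_add_left K n)).2)
    (hx₀.comp (tendsto_add_atTop_nat K)) fun n => ?_
  exact sqrt_div_mul_self hγ (Nat.cast_pos.2 (hK (n + K) (Nat.le_add_left K n)).1)

end SaddlePoint

/-- Corollary to Ingham's Tauberian theorem (coefficients version): if moreover the
non-negative coefficients `b_n` are weakly increasing, then
`b_n ~ (λ γ^{β/2+1/4} (log n)^α / (2^{α+1} √π n^{β/2+3/4})) e^{2√(γn)}`. -/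
theorem ingham_corollary_coefficients
    (b : ℕ → ℝ) (hb : ∀ n, 0 ≤ b n) (hmono : Monotone b)
    (hradius : ∀ q : ℝ, |q| < 1 → Summable (fun n : ℕ => b n * q ^ n))
    (lam α β γ : ℝ) (hlam : 0 < lam) (hγ : 0 < γ)
    (hreal : Tendsto (fun t : ℝ => (∑' n : ℕ, b n * Real.exp (-t * n)) /
        (lam * Real.log (1/t) ^ α * t ^ β * Real.exp (γ/t))) (𝓝[>] (0:ℝ)) (𝓝 1))
    (hangle : ∀ Δ : ℝ, 0 < Δ → ∃ C δ : ℝ, 0 < C ∧ 0 < δ ∧ ∀ z : ℂ, 0 < z.re →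
        |z.im| ≤ Δ * z.re → ‖z‖ < δ →
        ‖∑' n : ℕ, (b n : ℂ) * Complex.exp (-z * (n : ℂ))‖ ≤
          C * Real.log (1/‖z‖) ^ α * ‖z‖ ^ β * Real.exp (γ/‖z‖)) :
    Tendsto (fun n : ℕ => b n /
        (lam * γ ^ (β/2 + 1/4) * Real.log n ^ α /
            (2 ^ (α + 1) * Real.sqrt Real.pi * (n:ℝ) ^ (β/2 + 3/4)) *
          Real.exp (2 * Real.sqrt (γ * n)))) atTop (𝓝 1) := by
  have hreal' : Tendsto (fun t : ℝ => (∑' n : ℕ, b n * Real.exp (-t * n)) / growth α β γ t)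
      (𝓝[>] 0) (𝓝 lam) := by
    simpa only [growth, mul_one, mul_assoc, ← div_div, div_eq_mul_inv, mul_inv,
      mul_inv_cancel_left₀ hlam.ne', mul_left_comm lam] using hreal.const_mul lam
  have hangle' : ∀ Δ : ℝ, 0 < Δ → ∃ C δ : ℝ, 0 < C ∧ 0 < δ ∧ ∀ z : ℂ, 0 < z.re →
      |z.im| ≤ Δ * z.re → ‖z‖ < δ →
        ‖∑' n : ℕ, (b n : ℂ) * Complex.exp (-z * n)‖ ≤ C * growth α β γ ‖z‖ := by
    simpa only [growth, mul_assoc] using hangle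
  have hweight := tendsto_tiltedWeight_growth_sqrt_div hb hradius hreal' hangle' hmono hlam.le hγ
  have hc : lam / (2 * √(Real.pi * γ)) ≠ 0 := by positivity
  have hlim := (hweight.div_const (lam / (2 * √(Real.pi * γ)))).mul
    (tendsto_log_sub_div_log_rpow (Real.log γ) α)
  rw [div_self hc, one_mul] at hlim
  refine hlim.congr' ?_
  filter_upwards [eventually_gt_atTop 1, tendsto_natCast_atTop_atTop.eventually_gt_atTop γ]
    with n hn hnγ
  exact (div_eq_tiltedWeight_div_mul b hγ (Nat.one_lt_cast.2 hn) hnγ α β).symm
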